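/- arXiv:2504.05678 — 2 statements merged into one kernel-verified Lean document; each statement's English description precedes it below -/
import Mathlib

section
/- Let n ≥ 4. The top-trading-cycle rule TTC on any domain D of preferences satisfies equity⁺ under bipartite acclaim: at every profile P at which agents i and j are the acclaimed pair, TTC_i(P) = o_j and TTC_j(P) = o_i. -/
/-!
In the first round every agent points to her top object. Null agents point to themselves and leave.
An active agent on a pointing cycle points to an active agent (null agents are fixed points of
pointing), hence to her best active object, which is `i` or `j`; following the cycle further, both
`i` and `j` lie on it and point to each other (`acclaimed_of_cycle`). So either `i` and `j` trade in
the first round, or exactly the null agents leave (`rem_after_first`). In the latter case the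
remaining objects in the second round are the active ones, so `i` and `j` point to each other and
trade then. Assignments are never revised afterwards (`ttcStep_iterate_some`), and `n ≥ 2`, so at
least two rounds are run.
-/

/-- A preference is a strict linear order on the objects `Fin n`, encoded by its
rank function: `p o < p o'` means object `o` is strictly preferred to `o'`. -/
abbrev Pref (n : ℕ) := Fin n ≃ Fin n

/-- `o` is strictly preferred to `o'` under `p`. -/
def prefers {n : ℕ} (p : Pref n) (o o' : Fin n) : Prop := p o < p o'

/-- `o` is weakly preferred to `o'` under `p` (i.e. `o P o'` or `o = o'`). -/
def weakPref {n : ℕ} (p : Pref n) (o o' : Fin n) : Prop := p o ≤ p o'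

/-- The top-ranked object `r_1(p)`. -/
def topObj {n : ℕ} [NeZero n] (p : Pref n) : Fin n := p.symm 0

/-- The second-ranked object `r_2(p)`. -/
def secondObj {n : ℕ} [NeZero n] (p : Pref n) : Fin n := p.symm 1

/-- The `p`-best object of a (nonempty) finite set `S`: `max^p S`. -/
noncomputable def best {n : ℕ} [NeZero n] (p : Pref n) (S : Finset (Fin n)) : Fin n :=
  (S.toList.argmin (fun o => p o)).getD 0

/-- A profile belongs to the domain `D` coordinatewise. -/
def inD {n : ℕ} (D : Set (Pref n)) (P : Fin n → Pref n) : Prop := ∀ i, P i ∈ D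

/-- Individual rationality of an allocation at a profile: each agent `i` weakly
prefers her assigned object to her endowment `o_i = i`. -/
def IRAt {n : ℕ} (P : Fin n → Pref n) (m : Fin n → Fin n) : Prop :=
  ∀ i, weakPref (P i) (m i) i

/-- `m'` Pareto dominates `m` at profile `P`. -/
def ParetoDom {n : ℕ} (P : Fin n → Pref n) (m' m : Fin n → Fin n) : Prop :=
  (∀ i, weakPref (P i) (m' i) (m i)) ∧ ∃ j, prefers (P j) (m' j) (m j)

/-- Pareto efficiency of an allocation at a profile. -/
def EffAt {n : ℕ} (P : Fin n → Pref n) (m : Fin n → Fin n) : Prop :=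
  ¬ ∃ m' : Fin n → Fin n, Function.Bijective m' ∧ ParetoDom P m' m

/-- A rule maps profiles from the domain to allocations (bijections `N → O`). -/
def IsRule {n : ℕ} (D : Set (Pref n)) (f : (Fin n → Pref n) → (Fin n → Fin n)) : Prop :=
  ∀ P, inD D P → Function.Bijective (f P)

def Efficient {n : ℕ} (D : Set (Pref n)) (f : (Fin n → Pref n) → (Fin n → Fin n)) : Prop :=
  ∀ P, inD D P → EffAt P (f P)

def IndRational {n : ℕ} (D : Set (Pref n)) (f : (Fin n → Pref n) → (Fin n → Fin n)) : Prop :=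
  ∀ P, inD D P → IRAt P (f P)

def StrategyProof {n : ℕ} (D : Set (Pref n)) (f : (Fin n → Pref n) → (Fin n → Fin n)) : Prop :=
  ∀ P, inD D P → ∀ i, ∀ p' ∈ D, weakPref (P i) (f P i) (f (Function.update P i p') i)

/-- The active agents at profile `P` (those whose top object differs from their
endowment); since `o_i = i`, the set of active objects coincides with it. -/
def activeAgents {n : ℕ} [NeZero n] (P : Fin n → Pref n) : Finset (Fin n) :=
  Finset.univ.filter (fun i => topObj (P i) ≠ i)

/-- Agent `i` is the acclaimed agent at profile `P`. -/
def acclaimed {n : ℕ} [NeZero n] (P : Fin n → Pref n) (i : Fin n) : Prop :=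
  2 < (activeAgents P).card ∧ i ∈ activeAgents P ∧
    best (P i) (activeAgents P) ≠ i ∧
    ∀ j ∈ activeAgents P, j ≠ i → best (P j) (activeAgents P) = i

/-- Equity under unanimous acclaim. -/
def EquityUA {n : ℕ} [NeZero n] (D : Set (Pref n))
    (f : (Fin n → Pref n) → (Fin n → Fin n)) : Prop :=
  ∀ P, inD D P → ∀ i, acclaimed P i → f P i = best (P i) (activeAgents P)

/-- Agents `i` and `j` form the acclaimed pair at profile `P`. -/
def acclaimedPair {n : ℕ} [NeZero n] (P : Fin n → Pref n) (i j : Fin n) : Prop :=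
  ∃ Ni Nj : Finset (Fin n),
    Disjoint Ni Nj ∧ Ni ∪ Nj = activeAgents P ∧ Ni.card = Nj.card ∧ 1 < Ni.card ∧
    i ∈ Nj ∧ j ∈ Ni ∧
    (∀ l ∈ Ni, best (P l) (activeAgents P) = i) ∧
    (∀ l ∈ Nj, best (P l) (activeAgents P) = j)

/-- Equity under bipartite acclaim. -/
def EquityBA {n : ℕ} [NeZero n] (D : Set (Pref n))
    (f : (Fin n → Pref n) → (Fin n → Fin n)) : Prop :=
  ∀ P, inD D P → ∀ i j, acclaimedPair P i j → f P i = j ∨ f P j = i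

/-- Equity⁺ under bipartite acclaim. -/
def EquityPlusBA {n : ℕ} [NeZero n] (D : Set (Pref n))
    (f : (Fin n → Pref n) → (Fin n → Fin n)) : Prop :=
  ∀ P, inD D P → ∀ i j, acclaimedPair P i j → f P i = j ∧ f P j = i

/-- Single-peakedness of `p` w.r.t. the linear order on objects encoded by the
position permutation `σ` (`o < o'` iff `σ o < σ o'`). -/
def singlePeaked {n : ℕ} [NeZero n] (σ : Fin n ≃ Fin n) (p : Pref n) : Prop :=
  ∀ o o' : Fin n,
    ((σ o' < σ o ∧ σ o < σ (topObj p)) ∨ (σ (topObj p) < σ o ∧ σ o < σ o')) →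
    prefers p o o'

/-- The full single-peaked domain `D_<`. -/
def spDomain {n : ℕ} [NeZero n] (σ : Fin n ≃ Fin n) : Set (Pref n) :=
  {p | singlePeaked σ p}

/-- `D` is a single-peaked domain. -/
def IsSPDomain {n : ℕ} [NeZero n] (D : Set (Pref n)) : Prop :=
  ∃ σ : Fin n ≃ Fin n, D ⊆ spDomain σ

/-- Objects `o` and `o'` are connected in `D`: `o ∼ o'`. -/
def connectedObj {n : ℕ} [NeZero n] (D : Set (Pref n)) (o o' : Fin n) : Prop :=
  ∃ p ∈ D, ∃ p' ∈ D, topObj p = o ∧ secondObj p = o' ∧ topObj p' = o' ∧ secondObj p' = o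

/-- `D` is path-connected. -/
def pathConnected {n : ℕ} [NeZero n] (D : Set (Pref n)) : Prop :=
  ∀ o o' : Fin n, o ≠ o' → ∃ l : List (Fin n),
    l.Nodup ∧ l.head? = some o ∧ l.getLast? = some o' ∧ l.Chain' (connectedObj D)

/-- `p` and `p'` rank all objects in exactly opposite orders. -/
def reversedPair {n : ℕ} (p p' : Pref n) : Prop :=
  ∀ o o', prefers p o o' ↔ prefers p' o' o

/-- A rich domain: path-connected and containing two completely reversed preferences. -/
def richDomain {n : ℕ} [NeZero n] (D : Set (Pref n)) : Prop :=
  pathConnected D ∧ ∃ p ∈ D, ∃ p' ∈ D, reversedPair p p'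

/-- The restriction `→(x,y,z) ∈ R(D)`: whenever `x` is the best of `{x,y,z}`,
`y` is ranked above `z`. -/
def RestrR {n : ℕ} [NeZero n] (D : Set (Pref n)) (x y z : Fin n) : Prop :=
  ∀ p ∈ D, best p {x, y, z} = x → prefers p y z

/-- The ternary relation `(x,y,z) ∈ B(D)`. -/
def RelB {n : ℕ} [NeZero n] (D : Set (Pref n)) (x y z : Fin n) : Prop :=
  RestrR D x y z ∧ RestrR D z y x

/-! ### Extensive game forms and obvious strategy-proofness -/

/-- An extensive game form: a finite rooted tree of histories (lists of actions,
prefix-closed), a player function and an outcome function on terminal histories. -/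
structure GameForm (n : ℕ) where
  hist : Finset (List ℕ)
  root_mem : [] ∈ hist
  prefix_closed : ∀ h a, h ++ [a] ∈ hist → h ∈ hist
  player : List ℕ → Fin n
  outcome : List ℕ → (Fin n → Fin n)

/-- A strategy chooses an action at every history. -/
abbrev Strategy : Type := List ℕ → ℕ

/-- Terminal histories of the game form. -/
def GameForm.Terminal {n : ℕ} (Γ : GameForm n) (h : List ℕ) : Prop :=
  h ∈ Γ.hist ∧ ∀ a, h ++ [a] ∉ Γ.hist

/-- A strategy of agent `i` is valid if it always chooses a feasible action. -/
def GameForm.ValidStrat {n : ℕ} (Γ : GameForm n) (i : Fin n) (s : Strategy) : Prop :=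
  ∀ h ∈ Γ.hist, ¬ Γ.Terminal h → Γ.player h = i → h ++ [s h] ∈ Γ.hist

/-- Play from `h` under the strategy profile `s` reaches history `h'`. -/
inductive GameForm.Reaches {n : ℕ} (Γ : GameForm n) (s : Fin n → Strategy) :
    List ℕ → List ℕ → Prop
  | refl (h : List ℕ) : GameForm.Reaches Γ s h h
  | step {h h' : List ℕ} : GameForm.Reaches Γ s h h' → h' ∈ Γ.hist → ¬ Γ.Terminal h' →
      GameForm.Reaches Γ s h (h' ++ [s (Γ.player h') h'])

/-- `o` belongs to the feasible set `X_i(h, s_i)` of agent `i` at history `h`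
given her strategy `si`. -/
def GameForm.Feas {n : ℕ} (Γ : GameForm n) (i : Fin n) (h : List ℕ) (si : Strategy)
    (o : Fin n) : Prop :=
  ∃ s : Fin n → Strategy, (∀ j, Γ.ValidStrat j (s j)) ∧ s i = si ∧
    ∃ t, Γ.Reaches s h t ∧ Γ.Terminal t ∧ Γ.outcome t i = o

/-- `h` is a decision node of `i` reachable (on-path) when `i` plays `si`. -/
def GameForm.ReachableNode {n : ℕ} (Γ : GameForm n) (i : Fin n) (si : Strategy)
    (h : List ℕ) : Prop :=
  h ∈ Γ.hist ∧ ¬ Γ.Terminal h ∧ Γ.player h = i ∧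
    ∃ s : Fin n → Strategy, (∀ j, Γ.ValidStrat j (s j)) ∧ s i = si ∧ Γ.Reaches s [] h

/-- `si` obviously dominates `si'` at preference `p`: at every earliest point of
departure, the worst feasible outcome under `si` is weakly preferred to the best
feasible outcome under `si'`. -/
def GameForm.ObvDom {n : ℕ} (Γ : GameForm n) (i : Fin n) (p : Pref n)
    (si si' : Strategy) : Prop :=
  ∀ h, Γ.ReachableNode i si h → Γ.ReachableNode i si' h → si h ≠ si' h →
    ∀ o o', Γ.Feas i h si o → Γ.Feas i h si' o' → weakPref p o o'

/-- Obvious strategy-proofness of a rule `f` on domain `D`. -/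
def OSP {n : ℕ} (D : Set (Pref n)) (f : (Fin n → Pref n) → (Fin n → Fin n)) : Prop :=
  ∃ (Γ : GameForm n) (S : Fin n → Pref n → Strategy),
    (∀ i p, p ∈ D → Γ.ValidStrat i (S i p)) ∧
    (∀ i p, p ∈ D → ∀ s', Γ.ValidStrat i s' → Γ.ObvDom i p (S i p) s') ∧
    (∀ P : Fin n → Pref n, inD D P →
      ∃ t, Γ.Reaches (fun j => S j (P j)) [] t ∧ Γ.Terminal t ∧ Γ.outcome t = f P)

/-! ### The crawler, the designator, and top trading cycles -/

/-- The running state of the crawler/designator algorithms: the sub-allocation of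
objects currently held by remaining agents, and the final assignments so far. -/
structure AlgState (n : ℕ) where
  held : Fin n → Option (Fin n)
  res : Fin n → Option (Fin n)

/-- The object currently held by agent `i`. -/
def heldObj {n : ℕ} [NeZero n] (st : AlgState n) (i : Fin n) : Fin n := (st.held i).getD 0

/-- The remaining agents. -/
def remAgents {n : ℕ} (st : AlgState n) : Finset (Fin n) :=
  Finset.univ.filter (fun i => (st.held i).isSome)

/-- The remaining objects. -/
def remObjs {n : ℕ} [NeZero n] (st : AlgState n) : Finset (Fin n) :=
  (remAgents st).image (heldObj st)

/-- The object of `S` adjacently larger than `o` w.r.t. the order `σ`. -/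
noncomputable def adjLarger {n : ℕ} (σ : Fin n ≃ Fin n) (S : Finset (Fin n)) (o : Fin n) : Fin n :=
  ((S.filter (fun o' => σ o < σ o')).toList.argmin (fun o' => σ o')).getD o

/-- The agent `i^s` leaving at the current step: the remaining agent holding the
`σ`-smallest object among those whose best remaining object is weakly below their
held object. -/
noncomputable def leaver {n : ℕ} [NeZero n] (σ : Fin n ≃ Fin n) (P : Fin n → Pref n)
    (st : AlgState n) : Option (Fin n) :=
  ((remAgents st).filter
      (fun i => σ (best (P i) (remObjs st)) ≤ σ (heldObj st i))).toList.argmin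
    (fun i => σ (heldObj st i))

/-- One step of the crawler: the leaving agent takes her best remaining object,
and every remaining agent holding an object weakly above the taken object and
strictly below the leaver's object crawls to the adjacently larger object. -/
noncomputable def crawlerStep {n : ℕ} [NeZero n] (σ : Fin n ≃ Fin n) (P : Fin n → Pref n)
    (st : AlgState n) : AlgState n :=
  match leaver σ P st with
  | none => st
  | some is =>
    let taken := best (P is) (remObjs st)
    { held := fun j =>
        if j = is then none
        else if (st.held j).isSome = true ∧ σ taken ≤ σ (heldObj st j) ∧
            σ (heldObj st j) < σ (heldObj st is) then
          some (adjLarger σ (remObjs st) (heldObj st j))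
        else st.held j,
      res := Function.update st.res is (some taken) }

/-- Initially every agent holds her endowment `o_i = i`. -/
def crawlerInit (n : ℕ) : AlgState n := ⟨fun i => some i, fun _ => none⟩

/-- The crawler rule w.r.t. the object order `σ`. -/
noncomputable def crawler {n : ℕ} [NeZero n] (σ : Fin n ≃ Fin n) (P : Fin n → Pref n) :
    Fin n → Fin n :=
  fun i => (((crawlerStep σ P)^[n] (crawlerInit n)).res i).getD 0

/-- `τ(i)`: the active agent whose endowment is `max^{P_i} O_{m̄⁰}`. -/
noncomputable def desTau {n : ℕ} [NeZero n] (P : Fin n → Pref n) (i : Fin n) : Fin n :=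
  best (P i) (activeAgents P)

/-- Stage I of the designator: null agents receive their endowments and leave. -/
def desInit {n : ℕ} [NeZero n] (P : Fin n → Pref n) : AlgState n :=
  { held := fun i => if topObj (P i) = i then none else some i,
    res := fun i => if topObj (P i) = i then some i else none }

/-- One step of Stage II of the designator: the leaving agent `i^s` takes her best
remaining object; if `τ(i^s)` is remaining and holds an object weakly above the
taken object and strictly below `i^s`'s held object, then `τ(i^s)` directly
inherits `i^s`'s object and only agents below `τ(i^s)` crawl (designating);
otherwise the crawling updating applies. -/
noncomputable def desStep {n : ℕ} [NeZero n] (σ : Fin n ≃ Fin n) (P : Fin n → Pref n)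
    (st : AlgState n) : AlgState n :=
  match leaver σ P st with
  | none => st
  | some is =>
    let taken := best (P is) (remObjs st)
    let t := desTau P is
    if (st.held t).isSome = true ∧ σ taken ≤ σ (heldObj st t) ∧
        σ (heldObj st t) < σ (heldObj st is) then
      { held := fun j =>
          if j = is then none
          else if j = t then some (heldObj st is)
          else if (st.held j).isSome = true ∧ σ taken ≤ σ (heldObj st j) ∧
              σ (heldObj st j) < σ (heldObj st t) then
            some (adjLarger σ (remObjs st) (heldObj st j))
          else st.held j,
        res := Function.update st.res is (some taken) }
    else
      { held := fun j =>
          if j = is then none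
          else if (st.held j).isSome = true ∧ σ taken ≤ σ (heldObj st j) ∧
              σ (heldObj st j) < σ (heldObj st is) then
            some (adjLarger σ (remObjs st) (heldObj st j))
          else st.held j,
        res := Function.update st.res is (some taken) }

/-- The designator rule w.r.t. the object order `σ`. -/
noncomputable def designator {n : ℕ} [NeZero n] (σ : Fin n ≃ Fin n) (P : Fin n → Pref n) :
    Fin n → Fin n :=
  fun i => (((desStep σ P)^[n] (desInit P)).res i).getD 0

/-- One round of top trading cycles: every remaining agent points to the owner of
her favorite remaining object (owner of object `o` is agent `o`), and every agent
lying on a pointing cycle receives the object she points to and leaves. -/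
noncomputable def ttcStep {n : ℕ} [NeZero n] (P : Fin n → Pref n) (res : Fin n → Option (Fin n)) :
    Fin n → Option (Fin n) :=
  let rem : Finset (Fin n) := Finset.univ.filter (fun i => res i = none)
  let pt : Fin n → Fin n := fun i => best (P i) rem
  fun i =>
    match res i with
    | some o => some o
    | none =>
      if (List.range (n + 1)).any (fun k => (k != 0) && (pt^[k] i == i)) then some (pt i)
      else none

/-- The top-trading-cycle rule. -/
noncomputable def ttc {n : ℕ} [NeZero n] (P : Fin n → Pref n) : Fin n → Fin n :=
  fun i => (((ttcStep P)^[n] (fun _ => none)) i).getD 0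

/-! ### Best objects and the first rounds of top trading cycles -/

lemma best_spec {n : ℕ} [NeZero n] (p : Pref n) (S : Finset (Fin n)) (hS : S.Nonempty) :
    best p S ∈ S ∧ ∀ x ∈ S, p (best p S) ≤ p x := by
  unfold best
  cases h : S.toList.argmin (fun o => p o) with
  | none =>
    rw [List.argmin_eq_none, Finset.toList_eq_nil] at h
    exact absurd h hS.ne_empty
  | some m =>
    have hm : m ∈ S.toList.argmin (fun o => p o) := h
    refine ⟨by simpa using List.argmin_mem hm, fun x hx => ?_⟩
    exact List.le_of_mem_argmin (f := fun o => p o) (Finset.mem_toList.2 hx) hm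

lemma best_unique {n : ℕ} [NeZero n] (p : Pref n) (S : Finset (Fin n)) (x : Fin n) (hx : x ∈ S)
    (h : ∀ y ∈ S, p x ≤ p y) : best p S = x := by
  obtain ⟨h1, h2⟩ := best_spec p S ⟨x, hx⟩
  exact p.injective (le_antisymm (h2 x hx) (h _ h1))

lemma best_univ {n : ℕ} [NeZero n] (p : Pref n) : best p Finset.univ = topObj p :=
  best_unique p _ _ (Finset.mem_univ _) fun y _ => by simp [topObj]

/-- If the overall top object lies in `S`, it is also the best object of `S`. -/
lemma best_active_of_top {n : ℕ} [NeZero n] (p : Pref n) (S : Finset (Fin n))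
    (h : topObj p ∈ S) : best p S = topObj p :=
  best_unique p _ _ h fun y _ => by simp [topObj]

/-- Agents still unassigned in the state `res`. -/
abbrev ttcRem {n : ℕ} (res : Fin n → Option (Fin n)) : Finset (Fin n) :=
  Finset.univ.filter (fun i => res i = none)

lemma ttcStep_some {n : ℕ} [NeZero n] (P : Fin n → Pref n) (res : Fin n → Option (Fin n))
    (a o : Fin n) (h : res a = some o) : ttcStep P res a = some o := by
  simp [ttcStep, h]

lemma ttcStep_cycle {n : ℕ} [NeZero n] (P : Fin n → Pref n) (res : Fin n → Option (Fin n))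
    (a : Fin n) (h : res a = none) (k : ℕ) (hk : k ≠ 0) (hkn : k < n + 1)
    (hc : (fun i => best (P i) (ttcRem res))^[k] a = a) :
    ttcStep P res a = some (best (P a) (ttcRem res)) := by
  have : (List.range (n + 1)).any
      (fun k => (k != 0) && ((fun i => best (P i) (ttcRem res))^[k] a == a)) = true := by
    simp only [List.any_eq_true, List.mem_range]
    exact ⟨k, hkn, by simp [hk, hc]⟩
  simp only [ttcStep, h]
  rw [if_pos this]

lemma ttcStep_ne_none {n : ℕ} [NeZero n] (P : Fin n → Pref n) (res : Fin n → Option (Fin n))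
    (a : Fin n) (h : res a = none) (hs : ttcStep P res a ≠ none) :
    ∃ k, k ≠ 0 ∧ (fun i => best (P i) (ttcRem res))^[k] a = a := by
  by_contra! hc
  apply hs
  have : ¬ (List.range (n + 1)).any
      (fun k => (k != 0) && ((fun i => best (P i) (ttcRem res))^[k] a == a)) = true := by
    simp only [List.any_eq_true, List.mem_range]
    rintro ⟨k, -, hk⟩
    simp only [Bool.and_eq_true, bne_iff_ne, beq_iff_eq] at hk
    exact hc k hk.1 hk.2
  simp only [ttcStep, h]
  rw [if_neg this]

lemma ttcStep_iterate_some {n : ℕ} [NeZero n] (P : Fin n → Pref n) (a o : Fin n) (m : ℕ)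
    (res : Fin n → Option (Fin n)) (h : res a = some o) : (ttcStep P)^[m] res a = some o := by
  induction m generalizing res with
  | zero => exact h
  | succ m ih => exact ih _ (ttcStep_some P res a o h)

/-- Two unassigned agents who point to each other trade, as they form a cycle of length two. -/
lemma ttcStep_swap {n : ℕ} [NeZero n] (hn : 2 ≤ n) (P : Fin n → Pref n)
    (res : Fin n → Option (Fin n)) (i j : Fin n) (hi : res i = none)
    (hij : best (P i) (ttcRem res) = j) (hji : best (P j) (ttcRem res) = i) :
    ttcStep P res i = some j := by
  rw [ttcStep_cycle P res i hi 2 (by simp) (by omega) (by simp [hij, hji]), hij]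

lemma active_iff {n : ℕ} [NeZero n] (P : Fin n → Pref n) (a : Fin n) :
    a ∈ activeAgents P ↔ topObj (P a) ≠ a := by
  simp [activeAgents]

/-- Along a first-round cycle, the successor of an active agent is active and on a cycle. -/
lemma cycle_next {n : ℕ} [NeZero n] (P : Fin n → Pref n) (a : Fin n) (ha : a ∈ activeAgents P)
    (k : ℕ) (hk : k ≠ 0) (hc : (fun i => topObj (P i))^[k] a = a) :
    topObj (P a) ∈ activeAgents P ∧
      (fun i => topObj (P i))^[k] (topObj (P a)) = topObj (P a) := by
  constructor
  · rw [active_iff] at ha ⊢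
    intro hnull
    -- a null successor is a fixed point of pointing, so the path never returns to `a`
    obtain ⟨m, rfl⟩ := Nat.exists_eq_succ_of_ne_zero hk
    rw [Function.iterate_succ_apply, Function.iterate_fixed hnull] at hc
    exact ha hc
  · rw [← Function.iterate_succ_apply (fun i => topObj (P i)),
      Function.iterate_succ_apply', hc]

lemma acclaimed_of_cycle {n : ℕ} [NeZero n] (P : Fin n → Pref n) (i j : Fin n)
    (hij : best (P i) (activeAgents P) = j) (hji : best (P j) (activeAgents P) = i)
    (hall : ∀ a ∈ activeAgents P,
      best (P a) (activeAgents P) = i ∨ best (P a) (activeAgents P) = j)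
    (a : Fin n) (ha : a ∈ activeAgents P)
    (k : ℕ) (hk : k ≠ 0) (hc : (fun i => topObj (P i))^[k] a = a) :
    topObj (P i) = j ∧ topObj (P j) = i := by
  obtain ⟨h1, c1⟩ := cycle_next P a ha k hk hc
  obtain ⟨h2, c2⟩ := cycle_next P _ h1 k hk c1
  obtain ⟨h3, -⟩ := cycle_next P _ h2 k hk c2
  have e1 := best_active_of_top _ _ h1
  have e2 := best_active_of_top _ _ h2
  have e3 := best_active_of_top _ _ h3
  rcases hall a ha with h | h
  · rw [h] at e1
    rw [← e1] at e2 e3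
    rw [hij] at e2
    rw [← e2, hji] at e3
    exact ⟨e2.symm, e3.symm⟩
  · rw [h] at e1
    rw [← e1] at e2 e3
    rw [hji] at e2
    rw [← e2, hij] at e3
    exact ⟨e3.symm, e2.symm⟩

/-- If no active agent is on a first-round cycle, exactly the null agents leave in that round. -/
lemma rem_after_first {n : ℕ} [NeZero n] (P : Fin n → Pref n)
    (hno : ∀ a ∈ activeAgents P, ∀ k, k ≠ 0 → (fun i => topObj (P i))^[k] a ≠ a) :
    ttcRem (ttcStep P (fun _ => none)) = activeAgents P := by
  have hrem : ttcRem (fun _ : Fin n => (none : Option (Fin n))) = Finset.univ := by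
    simp [ttcRem]
  ext a
  simp only [ttcRem, Finset.mem_filter, Finset.mem_univ, true_and]
  constructor
  · intro h
    rw [active_iff]
    intro hnull
    have := ttcStep_cycle P (fun _ => none) a rfl 1 one_ne_zero (by have := NeZero.ne n; omega)
      (by rw [hrem]; simp [best_univ, hnull])
    simp [h] at this
  · intro ha
    by_contra hs
    obtain ⟨k, hk, hc⟩ := ttcStep_ne_none P (fun _ => none) a rfl hs
    rw [hrem] at hc
    simp only [best_univ] at hc
    exact hno a ha k hk hc

theorem ttc_equityPlusBA (n : ℕ) [NeZero n] (hn : 4 ≤ n) :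
    ∀ P : Fin n → Pref n, ∀ i j, acclaimedPair P i j → ttc P i = j ∧ ttc P j = i := by
  rintro P i j ⟨Ni, Nj, -, hU, -, -, hi, hj, hNi, hNj⟩
  have hij := hNj i hi
  have hji := hNi j hj
  have hia : i ∈ activeAgents P := hU ▸ Finset.mem_union_right _ hi
  have hja : j ∈ activeAgents P := hU ▸ Finset.mem_union_left _ hj
  have hall : ∀ a ∈ activeAgents P,
      best (P a) (activeAgents P) = i ∨ best (P a) (activeAgents P) = j := by
    intro a ha
    rw [← hU, Finset.mem_union] at ha
    exact ha.imp (hNi a) (hNj a)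
  have hrem : ttcRem (fun _ : Fin n => (none : Option (Fin n))) = Finset.univ := by
    simp [ttcRem]
  obtain ⟨m, rfl⟩ : ∃ m, n = m + 2 := ⟨n - 2, by omega⟩
  -- it suffices that both assignments are made within two rounds
  suffices h : (ttcStep P)^[2] (fun _ => none) i = some j ∧
      (ttcStep P)^[2] (fun _ => none) j = some i by
    unfold ttc
    rw [Function.iterate_add_apply, ttcStep_iterate_some P i j m _ h.1,
      ttcStep_iterate_some P j i m _ h.2]
    exact ⟨rfl, rfl⟩
  by_cases htop : topObj (P i) = j ∧ topObj (P j) = i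
  · have ei : best (P i) (ttcRem fun _ => none) = j := by rw [hrem, best_univ, htop.1]
    have ej : best (P j) (ttcRem fun _ => none) = i := by rw [hrem, best_univ, htop.2]
    exact ⟨ttcStep_some _ _ _ _ (ttcStep_swap (by omega) P _ i j rfl ei ej),
      ttcStep_some _ _ _ _ (ttcStep_swap (by omega) P _ j i rfl ej ei)⟩
  · have hr := rem_after_first P fun a ha k hk hc =>
      htop (acclaimed_of_cycle P i j hij hji hall a ha k hk hc)
    have ni : ttcStep P (fun _ => none) i = none := by
      simpa using (hr ▸ hia : i ∈ ttcRem (ttcStep P (fun _ => none)))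
    have nj : ttcStep P (fun _ => none) j = none := by
      simpa using (hr ▸ hja : j ∈ ttcRem (ttcStep P (fun _ => none)))
    exact ⟨ttcStep_swap (by omega) P _ i j ni (hr ▸ hij) (hr ▸ hji),
      ttcStep_swap (by omega) P _ j i nj (hr ▸ hji) (hr ▸ hij)⟩
end

section
/- Let N = {1,2,3,4} with objects o_1 < o_2 < o_3 < o_4, and consider the profile P of single-peaked preferences where P_1 and P_2 both rank (o_4, o_3, o_2, o_1) from best to worst and P_3 and P_4 both rank (o_1, o_2, o_3, o_4) from best to worst. Then the designator allocation is D(P) = {(1, o_4), (2, o_3), (3, o_1), (4, o_2)}; in particular agent 1, a member of the acclaimed pair {1,4}, receives her favorite object o_4, while D_4(P) = o_2 ≠ o_1, so the designator does not satisfy equity⁺ under bipartite acclaim. -/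
/-- The preference `(o_4, o_3, o_2, o_1)` (best to worst) as a rank function. -/
def Q1 : Pref 4 := Fin.revPerm
/-- The preference `(o_1, o_2, o_3, o_4)` (best to worst) as a rank function. -/
def Q2 : Pref 4 := Equiv.refl (Fin 4)

/-! ### Evaluating the algorithm's choices -/

lemma argmin_toList_eq {n : ℕ} {S : Finset (Fin n)} {f : Fin n → Fin n} {a : Fin n}
    (ha : a ∈ S) (h : ∀ b ∈ S, b ≠ a → f a < f b) : S.toList.argmin f = some a := by
  rw [List.argmin_eq_some_iff]
  refine ⟨Finset.mem_toList.2 ha, fun b hb => ?_, fun b hb hle => ?_⟩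
  · rcases eq_or_ne b a with rfl | hne
    · exact le_rfl
    · exact (h b (Finset.mem_toList.1 hb) hne).le
  · rcases eq_or_ne b a with rfl | hne
    · exact le_rfl
    · exact absurd (h b (Finset.mem_toList.1 hb) hne) hle.not_gt

lemma best_eq {n : ℕ} [NeZero n] {p : Pref n} {S : Finset (Fin n)} {a : Fin n}
    (ha : a ∈ S) (h : ∀ b ∈ S, b ≠ a → p a < p b) : best p S = a := by
  rw [best, argmin_toList_eq ha h, Option.getD_some]

lemma adjLarger_eq {n : ℕ} {σ : Fin n ≃ Fin n} {S : Finset (Fin n)} {o a : Fin n}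
    (ha : a ∈ S.filter (fun o' => σ o < σ o'))
    (h : ∀ b ∈ S.filter (fun o' => σ o < σ o'), b ≠ a → σ a < σ b) :
    adjLarger σ S o = a := by
  rw [adjLarger, argmin_toList_eq ha h, Option.getD_some]

/-- The leaver, computed from any function `c` listing the best remaining objects. -/
lemma leaver_eq {n : ℕ} [NeZero n] {σ : Fin n ≃ Fin n} {P : Fin n → Pref n} {st : AlgState n}
    {i : Fin n} (c : Fin n → Fin n) (hc : ∀ j, best (P j) (remObjs st) = c j)
    (hi : i ∈ (remAgents st).filter (fun j => σ (c j) ≤ σ (heldObj st j)))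
    (h : ∀ j ∈ (remAgents st).filter (fun j => σ (c j) ≤ σ (heldObj st j)),
      j ≠ i → σ (heldObj st i) < σ (heldObj st j)) :
    leaver σ P st = some i := by
  simp only [leaver, hc]
  exact argmin_toList_eq hi h

/-! ### The run of the designator on the example profile -/

/-- The profile `(Q1, Q1, Q2, Q2)`. -/
abbrev exProfile : Fin 4 → Pref 4 := ![Q1, Q1, Q2, Q2]

/-- Under `exProfile`, agents `0` and `1` choose the largest object `b` of `S` and agents `2` and
`3` the smallest object `a`. -/
lemma best_exProfile {S : Finset (Fin 4)} {a b : Fin 4} (ha : a ∈ S) (hb : b ∈ S)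
    (hmin : ∀ x ∈ S, a ≤ x) (hmax : ∀ x ∈ S, x ≤ b) (j : Fin 4) :
    best (exProfile j) S = ![b, b, a, a] j := by
  have h1 : best Q1 S = b := best_eq hb fun x hx hne =>
    Fin.rev_lt_rev.2 (lt_of_le_of_ne (hmax x hx) hne)
  have h2 : best Q2 S = a := best_eq ha fun x hx hne =>
    lt_of_le_of_ne (hmin x hx) hne.symm
  fin_cases j
  exacts [h1, h1, h2, h2]

lemma activeAgents_exProfile : activeAgents exProfile = Finset.univ := by decide

lemma desTau_exProfile (j : Fin 4) : desTau exProfile j = ![3, 3, 0, 0] j := by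
  rw [desTau, activeAgents_exProfile]
  exact best_exProfile (by decide) (by decide) (by decide) (by decide) j

lemma acclaimedPair_exProfile : acclaimedPair exProfile 0 3 := by
  refine ⟨{2, 3}, {0, 1}, by decide, by decide, by decide, by decide, by decide, by decide,
    fun l hl => ?_, fun l hl => ?_⟩ <;> rw [← desTau, desTau_exProfile] <;>
    revert l <;> decide

lemma desInit_exProfile :
    desInit exProfile = ⟨![some 0, some 1, some 2, some 3], ![none, none, none, none]⟩ := by
  rw [desInit, AlgState.mk.injEq]
  decide

/-- Agent `2` leaves with object `0` and designates agent `0`, who inherits object `2`. -/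
lemma desStep_one :
    desStep (Equiv.refl (Fin 4)) exProfile
      ⟨![some 0, some 1, some 2, some 3], ![none, none, none, none]⟩ =
      ⟨![some 2, some 1, none, some 3], ![none, none, some 0, none]⟩ := by
  have hb := best_exProfile (S := remObjs
    ⟨![some 0, some 1, some 2, some 3], ![none, none, none, none]⟩) (a := 0) (b := 3)
    (by decide) (by decide) (by decide) (by decide)
  have hl := leaver_eq (σ := Equiv.refl (Fin 4)) (i := 2) _ hb (by decide) (by decide)
  simp only [desStep, hl, hb, desTau_exProfile]
  rw [if_pos (by decide), AlgState.mk.injEq]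
  refine ⟨funext fun j => ?_, by decide⟩
  fin_cases j <;> rfl

/-- Agent `3` leaves with object `1` and designates agent `0`, who inherits object `3`;
agent `1` crawls to object `2`. -/
lemma desStep_two :
    desStep (Equiv.refl (Fin 4)) exProfile
      ⟨![some 2, some 1, none, some 3], ![none, none, some 0, none]⟩ =
      ⟨![some 3, some 2, none, none], ![none, none, some 0, some 1]⟩ := by
  have hb := best_exProfile (S := remObjs
    ⟨![some 2, some 1, none, some 3], ![none, none, some 0, none]⟩) (a := 1) (b := 3)
    (by decide) (by decide) (by decide) (by decide)
  have hl := leaver_eq (σ := Equiv.refl (Fin 4)) (i := 3) _ hb (by decide) (by decide)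
  have ha : adjLarger (Equiv.refl (Fin 4)) (remObjs
      ⟨![some 2, some 1, none, some 3], ![none, none, some 0, none]⟩) 1 = 2 :=
    adjLarger_eq (by decide) (by decide)
  simp only [desStep, hl, hb, desTau_exProfile]
  rw [if_pos (by decide), AlgState.mk.injEq]
  refine ⟨funext fun j => ?_, by decide⟩
  fin_cases j
  · rfl
  · exact congrArg some ha
  · rfl
  · rfl

/-- Agent `0` leaves with object `3`, which she holds. -/
lemma desStep_three :
    desStep (Equiv.refl (Fin 4)) exProfile
      ⟨![some 3, some 2, none, none], ![none, none, some 0, some 1]⟩ =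
      ⟨![none, some 2, none, none], ![some 3, none, some 0, some 1]⟩ := by
  have hb := best_exProfile (S := remObjs
    ⟨![some 3, some 2, none, none], ![none, none, some 0, some 1]⟩) (a := 2) (b := 3)
    (by decide) (by decide) (by decide) (by decide)
  have hl := leaver_eq (σ := Equiv.refl (Fin 4)) (i := 0) _ hb (by decide) (by decide)
  simp only [desStep, hl, hb, desTau_exProfile]
  rw [if_neg (by decide), AlgState.mk.injEq]
  refine ⟨funext fun j => ?_, by decide⟩
  fin_cases j <;> rfl

/-- Agent `1` leaves with object `2`, which she holds. -/
lemma desStep_four :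
    desStep (Equiv.refl (Fin 4)) exProfile
      ⟨![none, some 2, none, none], ![some 3, none, some 0, some 1]⟩ =
      ⟨![none, none, none, none], ![some 3, some 2, some 0, some 1]⟩ := by
  have hb := best_exProfile (S := remObjs
    ⟨![none, some 2, none, none], ![some 3, none, some 0, some 1]⟩) (a := 2) (b := 2)
    (by decide) (by decide) (by decide) (by decide)
  have hl := leaver_eq (σ := Equiv.refl (Fin 4)) (i := 1) _ hb (by decide) (by decide)
  simp only [desStep, hl, hb, desTau_exProfile]
  rw [if_neg (by decide), AlgState.mk.injEq]
  refine ⟨funext fun j => ?_, by decide⟩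
  fin_cases j <;> rfl

lemma designator_exProfile :
    designator (Equiv.refl (Fin 4)) exProfile = ![3, 2, 0, 1] := by
  funext i
  simp only [designator, Function.iterate_succ, Function.iterate_zero, Function.comp_apply, id_eq,
    desInit_exProfile, desStep_one, desStep_two, desStep_three, desStep_four]
  fin_cases i <;> rfl

lemma exProfile_mem_spDomain (i : Fin 4) :
    exProfile i ∈ spDomain (Equiv.refl (Fin 4)) := by
  simp only [spDomain, singlePeaked, prefers, Set.mem_ofPred_eq]
  revert i
  decide

theorem designator_violates_equityPlusBA :
    (∀ i, (![Q1, Q1, Q2, Q2] : Fin 4 → Pref 4) i ∈ spDomain (Equiv.refl (Fin 4))) ∧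
    acclaimedPair ![Q1, Q1, Q2, Q2] 0 3 ∧
    designator (Equiv.refl (Fin 4)) ![Q1, Q1, Q2, Q2] = ![3, 2, 0, 1] ∧
    designator (Equiv.refl (Fin 4)) ![Q1, Q1, Q2, Q2] 0 = 3 ∧
    topObj Q1 = 3 ∧
    designator (Equiv.refl (Fin 4)) ![Q1, Q1, Q2, Q2] 3 ≠ 0 ∧
    ¬ EquityPlusBA (spDomain (Equiv.refl (Fin 4))) (designator (Equiv.refl (Fin 4))) := by
  have h3 : designator (Equiv.refl (Fin 4)) exProfile 3 ≠ 0 := by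
    rw [designator_exProfile]; decide
  refine ⟨exProfile_mem_spDomain, acclaimedPair_exProfile, designator_exProfile, ?_, by decide, h3,
    fun hE => h3 (hE exProfile exProfile_mem_spDomain 0 3 acclaimedPair_exProfile).2⟩
  rw [designator_exProfile]
  rfl
end
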